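/- Let X be a locally compact Hausdorff space, ζ a quasi-integral on X, and O ⊆ X an open subset with compact closure. Then for all f, g ∈ C_c(X) with supports contained in O, |ζ(f) − ζ(g)| ≤ τ_ζ(O) · ‖f − g‖; that is, on functions supported in O the quasi-integral ζ is Lipschitz with constant τ_ζ(O). -/

import Mathlib

/-!
Let `h` be a bump function with values in `[0, 1]`, equal to `1` on the supports of `f` and `g`
and vanishing outside `O`. With `ε = ‖f - g‖` one has `f ≤ g + ε h`, so monotonicity reduces the
claim to `ζ (g + ε h) = ζ g + ε ζ h` (`add_mul_bump`), together with `ζ h ≤ τ_ζ(O)`.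

In general `g` and `h` do not lie in a common singly generated subspace: since `h = 1` wherever
`g ≠ 0`, the image of `(g, h)` in the plane is shaped like a `T`, with one leg each for
`h < 1`, `g > 0` and `g < 0`. Any two legs together can be parametrized by one function, which is
enough to apply quasi-linearity three times, with `n = min g 0` the negative part:
* `ζ (g + ε h) = ζ (max g 0) + ζ (n + ε h)`, both terms being functions of `g + ε h`
  (truncations above and below the level `ε`);
* `ζ (n + ε h) = ζ n + ζ (ε h)`, both terms being functions of `ε h - n`;
* `ζ g = ζ (max g 0) + ζ n`, both terms being functions of `g`.
-/

open Set Topology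
open scoped CompactlySupported

noncomputable section

/-- The family `𝒜(X)` of admissible sets: compact sets together with
open sets with compact closure. -/
def Admissible (X : Type*) [TopologicalSpace X] : Set (Set X) :=
  {A | IsCompact A ∨ (IsOpen A ∧ IsCompact (closure A))}

/-- A quasi-integral on `X`: a monotone, locally Lipschitz (w.r.t. the uniform norm,
on functions with support in a fixed compact set) functional on `C_c(X, ℝ)` which is
linear on every subspace of the form `{φ ∘ f | φ ∈ C(ℝ), φ 0 = 0}`. -/
structure QuasiIntegral (X : Type*) [TopologicalSpace X] where
  toFun : C_c(X, ℝ) → ℝ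
  mono' : ∀ f g : C_c(X, ℝ), (∀ x, f x ≤ g x) → toFun f ≤ toFun g
  lipschitz' : ∀ K : Set X, IsCompact K → ∃ N : ℝ, 0 ≤ N ∧
    ∀ f g : C_c(X, ℝ), tsupport ⇑f ⊆ K → tsupport ⇑g ⊆ K →
      |toFun f - toFun g| ≤ N * ⨆ x, |f x - g x|
  quasilin_add' : ∀ (f : C_c(X, ℝ)) (φ ψ : ℝ → ℝ), Continuous φ → Continuous ψ →
    φ 0 = 0 → ψ 0 = 0 → ∀ gφ gψ gs : C_c(X, ℝ),
    (∀ x, gφ x = φ (f x)) → (∀ x, gψ x = ψ (f x)) →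
    (∀ x, gs x = φ (f x) + ψ (f x)) → toFun gs = toFun gφ + toFun gψ
  quasilin_smul' : ∀ (f : C_c(X, ℝ)) (φ : ℝ → ℝ), Continuous φ → φ 0 = 0 →
    ∀ (c : ℝ) (gφ gc : C_c(X, ℝ)),
    (∀ x, gφ x = φ (f x)) → (∀ x, gc x = c * φ (f x)) → toFun gc = c * toFun gφ

/-- A topological measure on `X` (normalized to vanish on non-admissible sets):
a nonnegative, additive, monotone, regular set function on `𝒜(X)`. -/
structure TopMeasure (X : Type*) [TopologicalSpace X] where
  toFun : Set X → ℝ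
  zero_of_not_mem' : ∀ A : Set X, A ∉ Admissible X → toFun A = 0
  nonneg' : ∀ A : Set X, 0 ≤ toFun A
  additive' : ∀ A A' : Set X, A ∈ Admissible X → A' ∈ Admissible X →
    A ∪ A' ∈ Admissible X → Disjoint A A' → toFun (A ∪ A') = toFun A + toFun A'
  mono' : ∀ A A' : Set X, A ∈ Admissible X → A' ∈ Admissible X → A ⊆ A' →
    toFun A ≤ toFun A'
  outer_reg' : ∀ K : Set X, IsCompact K →
    toFun K = sInf (toFun '' {O : Set X | IsOpen O ∧ IsCompact (closure O) ∧ K ⊆ O})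
  inner_reg' : ∀ O : Set X, IsOpen O → IsCompact (closure O) →
    toFun O = sSup (toFun '' {K : Set X | IsCompact K ∧ K ⊆ O})

variable {X : Type*} [TopologicalSpace X]

/-- `τ_ζ(K) = inf {ζ(f) | f ∈ C_c(X), f ≥ 1_K}`, for `K` compact. -/
def tauCompact (ζ : QuasiIntegral X) (K : Set X) : ℝ :=
  sInf (ζ.toFun '' {f : C_c(X, ℝ) | ∀ x, K.indicator (fun _ => (1 : ℝ)) x ≤ f x})

/-- `τ_ζ(O) = sup {ζ(f) | f ∈ C_c(X), f ≤ 1_O}`, for `O` open with compact closure. -/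
def tauOpen (ζ : QuasiIntegral X) (O : Set X) : ℝ :=
  sSup (ζ.toFun '' {f : C_c(X, ℝ) | ∀ x, f x ≤ O.indicator (fun _ => (1 : ℝ)) x})

open scoped Classical in
/-- The induced set function `τ_ζ` of a quasi-integral `ζ`. -/
def inducedSetFun (ζ : QuasiIntegral X) (A : Set X) : ℝ :=
  if IsCompact A then tauCompact ζ A
  else if IsOpen A ∧ IsCompact (closure A) then tauOpen ζ A
  else 0

namespace QuasiIntegral

/-- Constants are additive for a quasi-integral in the following local sense: the bump function `h`
plays the role of the constant `1` on the set where `g` does not vanish. -/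
lemma add_mul_bump (ζ : QuasiIntegral X) (g h : C_c(X, ℝ)) (hpos : ∀ x, 0 ≤ h x)
    (hle : ∀ x, h x ≤ 1) (hone : ∀ x, g x ≠ 0 → h x = 1) {M : ℝ} (hM : 0 ≤ M) :
    ζ.toFun (g + M • h) = ζ.toFun g + M * ζ.toFun h := by
  have hMh : ∀ x, 0 ≤ M * h x ∧ M * h x ≤ M := fun x =>
    ⟨mul_nonneg hM (hpos x), mul_le_of_le_one_right hM (hle x)⟩
  have split : ζ.toFun g = ζ.toFun (g ⊔ 0) + ζ.toFun (g ⊓ 0) := by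
    refine ζ.quasilin_add' g (fun t => max t 0) (fun t => min t 0) (by fun_prop) (by fun_prop)
      (by simp) (by simp) _ _ _ (fun x => by simp) (fun x => by simp) (fun x => ?_)
    simp
  have upper : ζ.toFun (g + M • h) = ζ.toFun (g ⊔ 0) + ζ.toFun (g ⊓ 0 + M • h) := by
    have e1 : ∀ x, max (g x) 0 = max (g x + M * h x - M) 0 := fun x => by
      by_cases hx : g x = 0
      · have := hMh x
        rw [hx, max_self, max_eq_right (by linarith)]
      · rw [hone x hx]; congr 1; ring
    have e2 : ∀ x, min (g x) 0 + M * h x = min (g x + M * h x) M := fun x => by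
      by_cases hx : g x = 0
      · have := hMh x
        rw [hx, min_self, min_eq_left (by linarith)]
      · rw [hone x hx, mul_one, ← min_add_add_right, zero_add]
    refine ζ.quasilin_add' (g + M • h) (fun t => max (t - M) 0) (fun t => min t M)
      (by fun_prop) (by fun_prop) (by simpa using hM) (by simpa using hM) _ _ _
      (fun x => by simpa using e1 x) (fun x => by simpa using e2 x) (fun x => ?_)
    simp only [CompactlySupportedContinuousMap.add_apply,
      CompactlySupportedContinuousMap.smul_apply, smul_eq_mul]
    rw [← e1, ← e2]
    linarith [max_add_min (g x) 0]
  have lower : ζ.toFun (g ⊓ 0 + M • h) = ζ.toFun (g ⊓ 0) + ζ.toFun (M • h) := by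
    have e1 : ∀ x, min (g x) 0 = -max (M * h x - min (g x) 0 - M) 0 := fun x => by
      by_cases hx : g x = 0
      · have := hMh x
        rw [hx, min_self, max_eq_right (by linarith), neg_zero]
      · have := min_le_right (g x) 0
        rw [hone x hx, max_eq_left (by linarith)]; ring
    have e2 : ∀ x, M * h x = min (M * h x - min (g x) 0) M := fun x => by
      have := min_le_right (g x) 0
      by_cases hx : g x = 0
      · rw [hx, min_self, sub_zero, min_eq_left (hMh x).2]
      · rw [hone x hx, mul_one, min_eq_right (by linarith)]
    refine ζ.quasilin_add' (M • h - g ⊓ 0) (fun t => -max (t - M) 0) (fun t => min t M)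
      (by fun_prop) (by fun_prop) (by simpa using hM) (by simpa using hM) _ _ _
      (fun x => by simpa using e1 x) (fun x => by simpa using e2 x) (fun x => ?_)
    simp only [CompactlySupportedContinuousMap.add_apply, CompactlySupportedContinuousMap.sub_apply,
      CompactlySupportedContinuousMap.smul_apply, CompactlySupportedContinuousMap.inf_apply,
      CompactlySupportedContinuousMap.zero_apply, smul_eq_mul]
    rw [← e1, ← e2]
  have smul : ζ.toFun (M • h) = M * ζ.toFun h :=
    ζ.quasilin_smul' h id continuous_id rfl M h (M • h) (fun _ => rfl) (fun _ => rfl)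
  rw [upper, lower, smul, split]
  ring

/-- The supremum defining `tauOpen ζ O` is finite, because a compactly supported function equal to
`1` on `closure O` dominates all competitors. -/
lemma le_tauOpen [T2Space X] [LocallyCompactSpace X] (ζ : QuasiIntegral X) {O : Set X}
    (hOc : IsCompact (closure O)) {h : C_c(X, ℝ)}
    (hh : ∀ x, h x ≤ O.indicator (fun _ => (1 : ℝ)) x) : ζ.toFun h ≤ tauOpen ζ O := by
  obtain ⟨H, H1, Hc, -, H01⟩ :=
    exists_continuousMap_one_of_isCompact_subset_isOpen hOc isOpen_univ (subset_univ _)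
  refine le_csSup ⟨ζ.toFun ⟨H, Hc⟩, ?_⟩ ⟨h, hh, rfl⟩
  rintro _ ⟨k, hk, rfl⟩
  refine ζ.mono' _ _ fun x => (hk x).trans ?_
  by_cases hx : x ∈ O
  · rw [indicator_of_mem hx]
    exact (H1 (subset_closure hx)).ge
  · rw [indicator_of_notMem hx]
    exact (H01 x).1

lemma sub_le_tauOpen_mul [T2Space X] [LocallyCompactSpace X] (ζ : QuasiIntegral X) {O : Set X}
    (hO : IsOpen O) (hOc : IsCompact (closure O)) (f g : C_c(X, ℝ))
    (hf : tsupport ⇑f ⊆ O) (hg : tsupport ⇑g ⊆ O) :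
    ζ.toFun f - ζ.toFun g ≤ tauOpen ζ O * ⨆ x, |f x - g x| := by
  obtain ⟨H, H1, Hc, HO, H01⟩ := exists_continuousMap_one_of_isCompact_subset_isOpen
    (f.hasCompactSupport.isCompact.union g.hasCompactSupport.isCompact) hO (union_subset hf hg)
  let h : C_c(X, ℝ) := ⟨H, Hc⟩
  have hone_f : ∀ x, f x ≠ 0 → h x = 1 := fun x hx => H1 (.inl (subset_tsupport f hx))
  have hone_g : ∀ x, g x ≠ 0 → h x = 1 := fun x hx => H1 (.inr (subset_tsupport g hx))
  have hτ : ζ.toFun h ≤ tauOpen ζ O := ζ.le_tauOpen hOc fun x => by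
    by_cases hx : x ∈ O
    · rw [indicator_of_mem hx]
      exact (H01 x).2
    · rw [indicator_of_notMem hx]
      exact (image_eq_zero_of_notMem_tsupport fun hx' => hx (HO hx')).le
  have hbdd : BddAbove (range fun x => |f x - g x|) :=
    (f - g).continuous.norm.bddAbove_range_of_hasCompactSupport (f - g).hasCompactSupport.norm
  set ε := ⨆ x, |f x - g x|
  have hε : 0 ≤ ε := Real.iSup_nonneg fun x => abs_nonneg _
  have hfg : ∀ x, f x ≤ (g + ε • h) x := fun x => by
    change f x ≤ g x + ε * h x
    have hx : f x - g x ≤ ε := (le_abs_self _).trans (le_ciSup hbdd x)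
    by_cases h1 : h x = 1
    · rw [h1]; linarith
    · have hfx : f x = 0 := not_not.1 fun h0 => h1 (hone_f x h0)
      have hgx : g x = 0 := not_not.1 fun h0 => h1 (hone_g x h0)
      rw [hfx, hgx, zero_add]
      exact mul_nonneg hε (H01 x).1
  have key := ζ.mono' _ _ hfg
  rw [ζ.add_mul_bump g h (fun x => (H01 x).1) (fun x => (H01 x).2) hone_g hε] at key
  nlinarith [mul_le_mul_of_nonneg_right hτ hε]

end QuasiIntegral

/-- on functions supported in an open set `O` with compact closure,
a quasi-integral is Lipschitz with constant `τ_ζ(O)`. -/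
theorem quasiIntegral_lipschitz_tauOpen {X : Type*} [TopologicalSpace X]
    [T2Space X] [LocallyCompactSpace X] (ζ : QuasiIntegral X) (O : Set X)
    (hO : IsOpen O) (hOc : IsCompact (closure O)) (f g : C_c(X, ℝ))
    (hf : tsupport ⇑f ⊆ O) (hg : tsupport ⇑g ⊆ O) :
    |ζ.toFun f - ζ.toFun g| ≤ tauOpen ζ O * ⨆ x, |f x - g x| := by
  refine abs_sub_le_iff.2 ⟨ζ.sub_le_tauOpen_mul hO hOc f g hf hg, ?_⟩
  simp_rw [abs_sub_comm (f _)]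
  exact ζ.sub_le_tauOpen_mul hO hOc g f hg hf

end
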